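/- For every x ∈ H₂(ℍ_ℂ), dt₂(x) = x₁₁x₂₂ − x₂₁x₁₂. For every x ∈ H₃(ℍ_ℂ) with x₁₁ ≠ 0, dt₃(x) = x₁₁x₂₂x₃₃ + x₃₂x₂₁x₁₃ + x₃₁x₁₂x₂₃ − x₁₁x₃₂x₂₃ − x₂₂x₃₁x₁₃ − x₂₁x₁₂x₃₃, where all products are taken in ℍ_ℂ in the indicated order. -/

import Mathlib

/-!
The diagonal entries of a `⋄`-hermitian matrix are scalars, hence central, and invertible when
nonzero. For `x₁₁ ≠ 0` the recursion therefore gives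
`dt₂(x) = x₁₁ (x₂₂ - x₁₁⁻¹ x₂₁ x₁₂) = x₁₁ x₂₂ - x₂₁ x₁₂` (`dt_two_of_ne`). Letting only the corner
entry vary over `ℂ`, both sides are continuous and agree off `0`, so they agree everywhere
(`dt_two`).

For `dt₃`, the formula for `dt₂` is applied to the Schur complement of `x₁₁`, which is again
`⋄`-hermitian (`IsHerm.schur`); its corner entry may vanish, so the extended formula is needed.
On expanding (`schur_expand`), the two terms of degree four, `x₁₁⁻¹ x₂₁ x₁₂ x₃₁ x₁₃` and
`x₁₁⁻¹ x₃₁ x₁₂ x₂₁ x₁₃`, cancel because `x₂₁ x₁₂ = x₁₂ x₂₁` is a scalar.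
-/

noncomputable section

open Matrix

/-- The biquaternions `ℍ_ℂ`: quaternions with complex coefficients. -/
abbrev HC : Type := Quaternion ℂ

/-- The embedding `ℂ ⊆ ℍ_ℂ` as scalar biquaternions. -/
def cq (z : ℂ) : HC := ⟨z, 0, 0, 0⟩

/-- The `ℂ`-linear involution `x ↦ x⋄` (quaternion conjugation). -/
def qdia (x : HC) : HC := ⟨x.re, -x.imI, -x.imJ, -x.imK⟩

/-- Coefficientwise complex conjugation `x ↦ x̄`. -/
def qbar (x : HC) : HC :=
  ⟨starRingEnd ℂ x.re, starRingEnd ℂ x.imI, starRingEnd ℂ x.imJ, starRingEnd ℂ x.imK⟩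

/-- The conjugate-linear involution `x* = (x̄)⋄`. -/
def qstar (x : HC) : HC := qdia (qbar x)

/-- The natural (Euclidean/product) topology on the biquaternions `ℍ_ℂ ≅ ℂ⁴`. -/
instance : TopologicalSpace HC :=
  TopologicalSpace.induced (fun q : HC => (q.re, q.imI, q.imJ, q.imK)) inferInstance

/-- The 2×2 complex matrix `x̂` associated to a biquaternion `x`. -/
def hat (x : HC) : Matrix (Fin 2) (Fin 2) ℂ :=
  !![x.re + Complex.I * x.imI, x.imJ + Complex.I * x.imK;
     -x.imJ + Complex.I * x.imK, x.re - Complex.I * x.imI]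

/-- The `2n × 2n` complex matrix `Â` obtained by replacing every biquaternion entry `a`
of `A` by the 2×2 block `â`. -/
def hatM {n : ℕ} (A : Matrix (Fin n) (Fin n) HC) :
    Matrix (Fin n × Fin 2) (Fin n × Fin 2) ℂ :=
  Matrix.of fun p q => hat (A p.1 q.1) p.2 q.2

/-- `A` is `⋄`-hermitian: `Aᵈ = A`, i.e. `(A j i)⋄ = A i j` for all `i j`.
`H_n(ℍ_ℂ)` is the collection of all such matrices. -/
def IsHerm {n : ℕ} (A : Matrix (Fin n) (Fin n) HC) : Prop :=
  ∀ i j, qdia (A j i) = A i j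

/-- The defining properties of the sequence of determinants `(dt_n)_{n ≥ 1}`:
`D n` plays the role of `dt_{n+1} : H_{n+1}(ℍ_ℂ) → ℍ_ℂ`.
(i) continuity on `H_{n+1}(ℍ_ℂ)`; (ii) `dt₁((x₁₁)) = x₁₁`;
(iii) the inductive formula for `dt_{n+1}` when `x₁₁ ≠ 0`. -/
def IsDtSeq (D : ∀ n : ℕ, Matrix (Fin (n + 1)) (Fin (n + 1)) HC → HC) : Prop :=
  (∀ n : ℕ, ContinuousOn (D n) {A | IsHerm A}) ∧
  (∀ A : Matrix (Fin 1) (Fin 1) HC, IsHerm A → D 0 A = A 0 0) ∧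
  (∀ (n : ℕ) (A : Matrix (Fin (n + 2)) (Fin (n + 2)) HC), IsHerm A → A 0 0 ≠ 0 →
    D (n + 1) A = A 0 0 *
      D n (Matrix.of fun i j : Fin (n + 1) =>
        A i.succ j.succ - Ring.inverse (A 0 0) * A i.succ 0 * A 0 j.succ))

/-- The involution `⋄` is the star operation on `Quaternion ℂ`; note that the latter does not
conjugate the complex coefficients. -/
lemma qdia_eq_star (x : HC) : qdia x = star x := by
  ext <;> simp [qdia]

lemma cq_comm (a : ℂ) (x : HC) : cq a * x = x * cq a :=
  Quaternion.coe_commutes a x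

lemma IsHerm.diag {n : ℕ} {A : Matrix (Fin n) (Fin n) HC} (hA : IsHerm A) (i : Fin n) :
    A i i = cq (A i i).re := by
  have h := hA i i
  have key : ∀ z : ℂ, -z = z → z = 0 := fun z hz => by linear_combination (-1 / 2 : ℂ) * hz
  ext
  · rfl
  · exact key _ (congrArg QuaternionAlgebra.imI h)
  · exact key _ (congrArg QuaternionAlgebra.imJ h)
  · exact key _ (congrArg QuaternionAlgebra.imK h)

lemma cq_mul_cq (a b : ℂ) : cq a * cq b = cq (a * b) :=
  (Quaternion.coe_mul a b).symm

lemma cq_one : cq 1 = 1 := rfl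

lemma cq_zero : cq 0 = 0 := rfl

lemma inverse_cq {a : ℂ} (ha : a ≠ 0) : Ring.inverse (cq a) = cq a⁻¹ := by
  have h1 : cq a * cq a⁻¹ = 1 := by rw [cq_mul_cq, mul_inv_cancel₀ ha, cq_one]
  have h2 : cq a⁻¹ * cq a = 1 := by rw [cq_mul_cq, inv_mul_cancel₀ ha, cq_one]
  exact Ring.inverse_unit ⟨cq a, cq a⁻¹, h1, h2⟩

lemma IsHerm.inverse_diag {n : ℕ} {A : Matrix (Fin n) (Fin n) HC} (hA : IsHerm A) {i : Fin n}
    (h0 : A i i ≠ 0) :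
    Ring.inverse (A i i) = cq (A i i).re⁻¹ ∧ A i i * cq (A i i).re⁻¹ = 1 := by
  have ha := hA.diag i
  have hne : (A i i).re ≠ 0 := fun h => h0 (by rw [ha, h, cq_zero])
  constructor
  · conv_lhs => rw [ha]
    exact inverse_cq hne
  · conv_lhs => rw [ha]
    exact (cq_mul_cq _ _).trans (by rw [← cq_one]; exact congrArg cq (mul_inv_cancel₀ hne))

lemma qdia_schur (b : ℂ) (x y z : HC) :
    qdia (x - cq b * y * z) = qdia x - cq b * qdia z * qdia y := by
  have hb : star (cq b) = cq b := Quaternion.star_coe b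
  have hsub : ∀ u v : HC, star (u - v) = star u - star v := fun u v => star_sub u v
  have hmul : ∀ u v : HC, star (u * v) = star v * star u := fun u v => star_mul u v
  simp only [qdia_eq_star]
  rw [hsub, hmul, hmul, hb, ← cq_comm, ← mul_assoc, ← cq_comm]

/-- The Schur complement of the `(0, 0)` entry, here in terms of an arbitrary central factor `b`
in place of the inverse of that entry, is again `⋄`-hermitian. -/
lemma IsHerm.schur {n : ℕ} {A : Matrix (Fin (n + 1)) (Fin (n + 1)) HC} (hA : IsHerm A) (b : ℂ) :
    IsHerm (Matrix.of fun i j : Fin n =>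
      A i.succ j.succ - cq b * A i.succ 0 * A 0 j.succ) := by
  intro i j
  refine (qdia_schur b _ _ _).trans ?_
  rw [hA, hA, hA]
  rfl

/-- Since `x⋄` is the quaternion conjugate of `x`, both products `x x⋄` and `x⋄ x` are the
scalar `normSq x`. -/
lemma IsHerm.offdiag {n : ℕ} {A : Matrix (Fin n) (Fin n) HC} (hA : IsHerm A) (i j : Fin n) :
    ∃ N : ℂ, A i j * A j i = cq N ∧ A j i * A i j = cq N := by
  refine ⟨Quaternion.normSq (A i j), ?_, ?_⟩ <;> rw [← hA j i, qdia_eq_star]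
  · exact Quaternion.self_mul_star _
  · exact Quaternion.star_mul_self _

instance : T2Space HC :=
  T2Space.of_injective_continuous
    (f := fun q : HC => (q.re, q.imI, q.imJ, q.imK))
    (fun x y h => by
      simp only [Prod.mk.injEq] at h
      exact Quaternion.ext _ _ h.1 h.2.1 h.2.2.1 h.2.2.2)
    continuous_induced_dom

/-- The case `x₁₁ ≠ 0` of the formula for `dt₂`. -/
lemma dt_two_of_ne {D : ∀ n : ℕ, Matrix (Fin (n + 1)) (Fin (n + 1)) HC → HC}
    (hD : IsDtSeq D) {A : Matrix (Fin 2) (Fin 2) HC} (hA : IsHerm A) (h0 : A 0 0 ≠ 0) :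
    D 1 A = A 0 0 * A 1 1 - A 1 0 * A 0 1 := by
  obtain ⟨-, h1, h2⟩ := hD
  obtain ⟨hinv, hc⟩ := hA.inverse_diag h0
  have hD2 := h2 0 A hA h0
  rw [hinv, h1 _ (hA.schur _)] at hD2
  simp only [Matrix.of_apply, mul_sub, ← mul_assoc, hc, one_mul] at hD2
  exact hD2

/-- The line of matrices agreeing with `A` off the `(0, 0)` entry, parametrized by that entry. -/
def cornerLine (A : Matrix (Fin 2) (Fin 2) HC) (t : ℂ) : Matrix (Fin 2) (Fin 2) HC :=
  !![cq t, A 0 1; A 1 0, A 1 1]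

lemma continuous_cq_mul_sub (q r : HC) : Continuous fun t : ℂ => cq t * q - r := by
  have h : ∀ t : ℂ, cq t * q = t • q := fun t => Quaternion.coe_mul_eq_smul t q
  refine continuous_induced_rng.2 ?_
  simp only [Function.comp_def, h, Quaternion.re_sub, Quaternion.imI_sub, Quaternion.imJ_sub,
    Quaternion.imK_sub, Quaternion.re_smul, Quaternion.imI_smul, Quaternion.imJ_smul,
    Quaternion.imK_smul]
  fun_prop

lemma continuous_cornerLine (A : Matrix (Fin 2) (Fin 2) HC) : Continuous (cornerLine A) := by
  refine continuous_matrix fun i j => ?_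
  have h : Continuous fun t : ℂ => cq t := by
    simpa using continuous_cq_mul_sub 1 0
  fin_cases i <;> fin_cases j
  · exact h
  all_goals exact continuous_const

/-- On `H₂`, both sides of the formula are continuous in the corner entry, so the formula extends
from nonzero corner entries to all of them. -/
lemma dt_two {D : ∀ n : ℕ, Matrix (Fin (n + 1)) (Fin (n + 1)) HC → HC}
    (hD : IsDtSeq D) {A : Matrix (Fin 2) (Fin 2) HC} (hA : IsHerm A) :
    D 1 A = A 0 0 * A 1 1 - A 1 0 * A 0 1 := by
  have hherm : ∀ t, IsHerm (cornerLine A t) := by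
    intro t i j
    fin_cases i <;> fin_cases j
    · exact (qdia_eq_star _).trans (Quaternion.star_coe t)
    · exact hA 0 1
    · exact hA 1 0
    · exact hA 1 1
  have hcont : Continuous fun t => D 1 (cornerLine A t) :=
    (hD.1 1).comp_continuous (continuous_cornerLine A) hherm
  have heq := hcont.ext_on (dense_compl_singleton (0 : ℂ))
    (continuous_cq_mul_sub (A 1 1) (A 1 0 * A 0 1)) (fun t ht => by
      refine dt_two_of_ne hD (hherm t) fun h => ht ?_
      exact congrArg QuaternionAlgebra.re h)
  have hA0 : cornerLine A (A 0 0).re = A := by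
    ext1 i j
    fin_cases i <;> fin_cases j
    · exact (hA.diag 0).symm
    all_goals rfl
  have := congrFun heq (A 0 0).re
  simp only [hA0, ← hA.diag 0] at this
  exact this

/-- The identity behind the formula for `dt₃`, in any ring: `b` is a central inverse of `a`,
and `x₂₁ x₁₂ = x₁₂ x₂₁ = N` is central. -/
lemma schur_expand {R : Type*} [Ring R] {a b N x12 x13 x21 x22 x23 x31 x32 x33 : R}
    (hab : a * b = 1) (hb : ∀ y, b * y = y * b) (hN : ∀ y, N * y = y * N)
    (h12 : x12 * x21 = N) (h21 : x21 * x12 = N) :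
    a * ((x22 - b * x21 * x12) * (x33 - b * x31 * x13)
        - (x32 - b * x31 * x12) * (x23 - b * x21 * x13))
      = a * x22 * x33 + x32 * x21 * x13 + x31 * x12 * x23
        - a * x32 * x23 - x22 * x31 * x13 - x21 * x12 * x33 := by
  have hcancel : ∀ y, b * (a * y) = y := fun y => by
    rw [← mul_assoc, hb, hab, one_mul]
  have e1 : ∀ y z, y * (b * z) = b * (y * z) := fun y z => by
    rw [← mul_assoc, ← hb, mul_assoc]
  -- The two quartic terms cancel because `N` commutes with `x31`.
  have e2 : x21 * (x12 * (x31 * x13)) = x31 * (x12 * (x21 * x13)) := by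
    rw [← mul_assoc x21, h21, ← mul_assoc x12, h12, ← mul_assoc, hN, mul_assoc]
  simp only [mul_sub, sub_mul, mul_assoc, e1, hcancel, e2]
  abel

/-- For every `x ∈ H₂(ℍ_ℂ)`, `dt₂(x) = x₁₁x₂₂ − x₂₁x₁₂`; and for every
`x ∈ H₃(ℍ_ℂ)` with `x₁₁ ≠ 0`,
`dt₃(x) = x₁₁x₂₂x₃₃ + x₃₂x₂₁x₁₃ + x₃₁x₁₂x₂₃ − x₁₁x₃₂x₂₃ − x₂₂x₃₁x₁₃ − x₂₁x₁₂x₃₃`,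
all products taken in `ℍ_ℂ` in the indicated order (here `D 1 = dt₂`, `D 2 = dt₃`). -/
theorem statement4 (D : ∀ n : ℕ, Matrix (Fin (n + 1)) (Fin (n + 1)) HC → HC)
    (hD : IsDtSeq D) :
    (∀ A : Matrix (Fin 2) (Fin 2) HC, IsHerm A →
      D 1 A = A 0 0 * A 1 1 - A 1 0 * A 0 1) ∧
    (∀ A : Matrix (Fin 3) (Fin 3) HC, IsHerm A → A 0 0 ≠ 0 →
      D 2 A = A 0 0 * A 1 1 * A 2 2 + A 2 1 * A 1 0 * A 0 2 + A 2 0 * A 0 1 * A 1 2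
        - A 0 0 * A 2 1 * A 1 2 - A 1 1 * A 2 0 * A 0 2 - A 1 0 * A 0 1 * A 2 2) := by
  refine ⟨fun A hA => dt_two hD hA, fun A hA h0 => ?_⟩
  obtain ⟨hinv, hab⟩ := hA.inverse_diag h0
  have hD3 := hD.2.2 1 A hA h0
  rw [hinv, dt_two hD (hA.schur _)] at hD3
  obtain ⟨N, h12, h21⟩ := hA.offdiag 0 1
  exact hD3.trans (schur_expand hab (cq_comm _) (cq_comm N) h12 h21)
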